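/- Let M be a reduced G_C-perfect R-module of G_C-dimension n. Then r.grade_R(M,C) + r.grade_R(Tr_C(M), C) = grade_R(Ext_R^n(M,C)) + 1 (as an equality in ℕ ∪ {∞}). -/

import Mathlib

open CategoryTheory TensorProduct

noncomputable section

universe u

variable (R : Type u) [CommRing R]

/-- The `i`-th Ext module `Ext_R^i(M, N)`. -/
def ExtM (M N : ModuleCat.{u} R) (i : ℕ) : ModuleCat.{u} R :=
  ((Ext R (ModuleCat.{u} R) i).obj (Opposite.op M)).obj N

/-- The `i`-th Tor module `Tor_i^R(M, N)`. -/
def TorM (M N : ModuleCat.{u} R) (i : ℕ) : ModuleCat.{u} R :=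
  ((Tor (ModuleCat.{u} R) i).obj M).obj N

/-- The biduality (evaluation) map `M → Hom_R(Hom_R(M, C), C)`. -/
def bidualityMap (C M : ModuleCat.{u} R) :
    ↥M →ₗ[R] ((↥M →ₗ[R] ↥C) →ₗ[R] ↥C) :=
  (LinearMap.id : (↥M →ₗ[R] ↥C) →ₗ[R] (↥M →ₗ[R] ↥C)).flip

/-- `C` is a semidualizing `R`-module. -/
def IsSemidualizing (C : ModuleCat.{u} R) : Prop :=
  Module.Finite R ↥C ∧
  Function.Bijective (fun r : R => (r • LinearMap.id : ↥C →ₗ[R] ↥C)) ∧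
  ∀ i : ℕ, 0 < i → Subsingleton (ExtM R C C i)

/-- `M` is totally `C`-reflexive. -/
def IsTotallyCReflexive (C M : ModuleCat.{u} R) : Prop :=
  Module.Finite R ↥M ∧
  Function.Bijective (bidualityMap R C M) ∧
  (∀ i : ℕ, 0 < i → Subsingleton (ExtM R M C i)) ∧
  (∀ i : ℕ, 0 < i → Subsingleton (ExtM R (ModuleCat.of R (↥M →ₗ[R] ↥C)) C i))

/-- `G_C`-dimension of `M` is at most `n`: there is an exact sequence
`0 → X_n → ⋯ → X_0 → M → 0` with each `X_i` totally `C`-reflexive. -/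
def gcdimLE (C : ModuleCat.{u} R) : ℕ → ModuleCat.{u} R → Prop
  | 0, M => IsTotallyCReflexive R C M
  | n+1, M => ∃ (X K : ModuleCat.{u} R) (f : ↥K →ₗ[R] ↥X) (g : ↥X →ₗ[R] ↥M),
      Function.Injective f ∧ Function.Surjective g ∧
      LinearMap.ker g = LinearMap.range f ∧
      IsTotallyCReflexive R C X ∧ gcdimLE C n K

/-- The `G_C`-dimension of `M`, as an element of `ℕ∞`. -/
def gcdim (C M : ModuleCat.{u} R) : ℕ∞ :=
  sInf ((fun n : ℕ => (n : ℕ∞)) '' {n | gcdimLE R C n M})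

/-- `grade_R(M) = inf { i | Ext_R^i(M, R) ≠ 0 }`, with `grade 0 = ∞`. -/
def gradeR (M : ModuleCat.{u} R) : ℕ∞ :=
  sInf ((fun i : ℕ => (i : ℕ∞)) ''
    {i | ¬ Subsingleton (ExtM R M (ModuleCat.of R R) i)})

/-- Reduced grade of `M` with respect to `C`. -/
def rgrade (C M : ModuleCat.{u} R) : ℕ∞ :=
  sInf ((fun i : ℕ => (i : ℕ∞)) ''
    {i | 0 < i ∧ ¬ Subsingleton (ExtM R M C i)})

/-- `M` is reduced `G_C`-perfect. -/
def IsReducedGCPerfect (C M : ModuleCat.{u} R) : Prop :=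
  gcdim R C M ≠ ⊤ ∧ rgrade R C M = gcdim R C M

/-- `M` is `G_C`-perfect. -/
def IsGCPerfect (C M : ModuleCat.{u} R) : Prop :=
  gcdim R C M ≠ ⊤ ∧ gradeR R M = gcdim R C M

/-- `π : P → M` is a projective cover: `P` projective, `π` surjective with superfluous kernel. -/
def IsProjectiveCover {P M : ModuleCat.{u} R} (π : ↥P →ₗ[R] ↥M) : Prop :=
  Module.Projective R ↥P ∧ Function.Surjective π ∧
  ∀ N : Submodule R ↥P, N ⊔ LinearMap.ker π = ⊤ → N = ⊤

/-- `P₁ →d P₀ →π M → 0` is a minimal projective presentation of `M`. -/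
def IsMinimalPresentation {P1 P0 M : ModuleCat.{u} R}
    (d : ↥P1 →ₗ[R] ↥P0) (π : ↥P0 →ₗ[R] ↥M) : Prop :=
  Module.Finite R ↥P1 ∧ Module.Finite R ↥P0 ∧
  IsProjectiveCover R π ∧
  LinearMap.range d = LinearMap.ker π ∧
  Module.Projective R ↥P1 ∧
  ∀ N : Submodule R ↥P1, N ⊔ LinearMap.ker d = ⊤ → N = ⊤

/-- `T` is (a module isomorphic to) the transpose `Tr_C(M)` of `M` with respect to `C`,
computed from a minimal projective presentation of `M`. -/
def IsTransposeC (C M T : ModuleCat.{u} R) : Prop :=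
  ∃ (P1 P0 : ModuleCat.{u} R) (d : ↥P1 →ₗ[R] ↥P0) (π : ↥P0 →ₗ[R] ↥M),
    IsMinimalPresentation R d π ∧
    Nonempty (↥T ≃ₗ[R]
      ((↥P1 →ₗ[R] ↥C) ⧸ LinearMap.range (LinearMap.lcomp R ↥C d)))

/-- `T` is the usual Auslander transpose `Tr(M) = Tr_R(M)`. -/
def IsTranspose (M T : ModuleCat.{u} R) : Prop :=
  IsTransposeC R (ModuleCat.of R R) M T

/-- `S` is (a module isomorphic to) the first syzygy `Ω N`, i.e. the kernel of a
projective cover of `N`. -/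
def IsSyzygyOf (N S : ModuleCat.{u} R) : Prop :=
  ∃ (P : ModuleCat.{u} R) (π : ↥P →ₗ[R] ↥N),
    Module.Finite R ↥P ∧ IsProjectiveCover R π ∧
    Nonempty (↥S ≃ₗ[R] LinearMap.ker π)

/-- `S` is (a module isomorphic to) the `n`-th syzygy `Ωⁿ M`. -/
def IsNthSyzygy : ℕ → ModuleCat.{u} R → ModuleCat.{u} R → Prop
  | 0, M, S => Nonempty (↥S ≃ₗ[R] ↥M)
  | n+1, M, S => ∃ K : ModuleCat.{u} R, IsNthSyzygy n M K ∧ IsSyzygyOf R K S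

/-- `L` is (a module isomorphic to) `λ M = Ω Tr M`. -/
def IsLambda (M L : ModuleCat.{u} R) : Prop :=
  ∃ T : ModuleCat.{u} R, IsTranspose R M T ∧ IsSyzygyOf R T L

/-- `M` is horizontally linked, i.e. `M ≅ λλM`. -/
def IsHorizontallyLinked (M : ModuleCat.{u} R) : Prop :=
  ∃ L L2 : ModuleCat.{u} R, IsLambda R M L ∧ IsLambda R L L2 ∧
    Nonempty (↥M ≃ₗ[R] ↥L2)

/-- `M` is stable: it has no non-zero projective direct summand. -/
def IsStable (M : ModuleCat.{u} R) : Prop :=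
  ∀ (P N : ModuleCat.{u} R), Module.Projective R ↥P →
    Nonempty (↥M ≃ₗ[R] (↥P × ↥N)) → Subsingleton ↥P

/-- `N` belongs to the Auslander class `A_C`. -/
def MemAuslanderClass (C N : ModuleCat.{u} R) : Prop :=
  Function.Bijective (TensorProduct.mk R ↥N ↥C) ∧
  (∀ i : ℕ, 0 < i → Subsingleton (TorM R C N i)) ∧
  (∀ i : ℕ, 0 < i → Subsingleton
    (ExtM R C (ModuleCat.of R (↥N ⊗[R] ↥C)) i))

/-- `R` is semiperfect: every finite `R`-module has a projective cover. -/
def IsSemiperfectRing : Prop :=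
  ∀ M : ModuleCat.{u} R, Module.Finite R ↥M →
    ∃ (P : ModuleCat.{u} R) (π : ↥P →ₗ[R] ↥M),
      Module.Finite R ↥P ∧ IsProjectiveCover R π

/-- Depth over a local ring, via Ext from the residue field. -/
def rdepth [IsLocalRing R] (M : ModuleCat.{u} R) : ℕ∞ :=
  sInf ((fun i : ℕ => (i : ℕ∞)) ''
    {i | ¬ Subsingleton
      (ExtM R (ModuleCat.of R (IsLocalRing.ResidueField R)) M i)})

/-- Projective dimension at most `n`. -/
def pdimLE : ℕ → ModuleCat.{u} R → Prop
  | 0, M => Module.Projective R ↥M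
  | n+1, M => ∃ (X K : ModuleCat.{u} R) (f : ↥K →ₗ[R] ↥X) (g : ↥X →ₗ[R] ↥M),
      Function.Injective f ∧ Function.Surjective g ∧
      LinearMap.ker g = LinearMap.range f ∧
      Module.Projective R ↥X ∧ pdimLE n K

/-- Projective dimension, as an element of `ℕ∞`. -/
def pdim (M : ModuleCat.{u} R) : ℕ∞ :=
  sInf ((fun n : ℕ => (n : ℕ∞)) '' {n | pdimLE R n M})

/-- `M` is `C`-`k`-torsionless. -/
def IsCkTorsionless (C M : ModuleCat.{u} R) (k : ℕ) : Prop :=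
  k = 0 ∨ ∀ T : ModuleCat.{u} R, IsTransposeC R C M T →
    ∀ i : ℕ, 1 ≤ i → i ≤ k → Subsingleton (ExtM R T C i)

/-- `M` is a `C`-syzygy: it embeds into `P ⊗_R C` with `P` finite projective. -/
def IsCSyzygy (C M : ModuleCat.{u} R) : Prop :=
  ∃ (P : ModuleCat.{u} R), Module.Finite R ↥P ∧ Module.Projective R ↥P ∧
    ∃ f : ↥M →ₗ[R] (↥P ⊗[R] ↥C), Function.Injective f


/-- There is an exact sequence `0 → N → X_k → ⋯ → X_1 → M → 0` of finite `R`-modules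
with `Ext_R^i(X_j, C) = 0` for all `i > 0` and all `j`. -/
def ExtVanishingChain (C : ModuleCat.{u} R) : ℕ → ModuleCat.{u} R → ModuleCat.{u} R → Prop
  | 0, N, M => Nonempty (↥N ≃ₗ[R] ↥M)
  | k+1, N, M => ∃ (X K : ModuleCat.{u} R) (f : ↥K →ₗ[R] ↥X) (g : ↥X →ₗ[R] ↥M),
      Function.Injective f ∧ Function.Surjective g ∧
      LinearMap.ker g = LinearMap.range f ∧
      Module.Finite R ↥X ∧ (∀ i : ℕ, 0 < i → Subsingleton (ExtM R X C i)) ∧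
      ExtVanishingChain C k N K

/-!
Put `E = Ext^n(M, C)`, let `P₁ → P₀ → M → 0` be a finite projective presentation and let `K` be the
image of `P₁ → P₀`.

If `n = 1`, then `K` is totally `C`-reflexive, so `Coker(K^C → P₁^C)`, the dual of the totally
`C`-reflexive kernel of `P₁ → K`, has no positive `Ext` into `C`. It is the quotient of `Tr_C(M)` by
`Coker(P₀^C → K^C) = E`, hence `Ext^i(E, C)` and `Ext^i(Tr_C(M), C)` vanish together for `i > 0`.
Moreover `Hom(E, C) = 0`, because biduality turns it into the kernel of `K → P₀`. Replacing `M` by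
`K` lowers `n` by one, does not change `E`, and moves `Ext^i(Tr_C(M), C)` to
`Ext^{i+1}(Tr_C(K), C)`, while `Ext^1(Tr_C(K), C) = 0` by biduality again. By induction,
`Ext^j(E, C)` vanishes for `j < n`, and for `j ≥ n` it vanishes together with
`Ext^{j-n+1}(Tr_C(M), C)`.

It remains to see that the grade of `E` may be computed with `C` in place of `R`. If `Ext^j(E, C)`
vanishes for `j < k`, then `Ext^k(E, R) = Ext^k(E, Hom(C, C))` is isomorphic by evaluation to
`Hom(C, Ext^k(E, C))`, which vanishes only if `Ext^k(E, C)` does, because `C` is faithful.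
-/

section ExtComparison

variable {R} {M N : ModuleCat.{u} R}

lemma preservesFiniteColimits_rightOp_linearYoneda_obj (N : ModuleCat.{u} R) :
    Limits.PreservesFiniteColimits ((linearYoneda R (ModuleCat.{u} R)).obj N).rightOp := by
  have : Limits.PreservesFiniteLimits
      ((linearYoneda R (ModuleCat.{u} R)).obj N ⋙ forget (ModuleCat.{u} R)) :=
    inferInstanceAs (Limits.PreservesFiniteLimits (yoneda.obj N))
  have : Limits.PreservesFiniteLimits ((linearYoneda R (ModuleCat.{u} R)).obj N) :=
    Limits.preservesFiniteLimits_of_reflects_of_preserves _ (forget (ModuleCat.{u} R))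
  exact Limits.preservesFiniteColimits_rightOp _

lemma nonempty_extM_zero_linearEquiv_ext (M N : ModuleCat.{u} R) :
    Nonempty (ExtM R M N 0 ≃ₗ[R] Abelian.Ext M N 0) := by
  have := preservesFiniteColimits_rightOp_linearYoneda_obj N
  let homIso : ModuleCat.of R (M ⟶ N) ≅ ExtM R M N 0 :=
    (((linearYoneda R (ModuleCat.{u} R)).obj N).rightOp.leftDerivedZeroIsoSelf.app M).unop
  exact ⟨homIso.symm.toLinearEquiv.trans Abelian.Ext.linearEquiv₀.symm⟩

lemma smul_extMk (P : ProjectiveResolution M) {n m : ℕ} (r : R) (f : P.complex.X n ⟶ N)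
    (hm : n + 1 = m) (hf : P.complex.d m n ≫ f = 0) :
    P.extMk (r • f) m hm (by rw [Linear.comp_smul, hf, smul_zero]) = r • P.extMk f m hm hf := by
  rw [Abelian.Ext.smul_eq_comp_mk₀, P.extMk_comp_mk₀]
  congr 1

lemma nonempty_homology_linearYonedaObj_linearEquiv_ext (P : ProjectiveResolution M)
    (N : ModuleCat.{u} R) (n : ℕ) :
    Nonempty ((P.complex.linearYonedaObj R N).homology (n + 1) ≃ₗ[R] Abelian.Ext M N (n + 1)) := by
  let K := P.complex.linearYonedaObj R N
  let S := K.sc' n (n + 1) (n + 2)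
  have homologyIso : K.homology (n + 1) ≅ S.moduleCatLeftHomologyData.H :=
    ShortComplex.homologyMapIso (K.isoSc' n (n + 1) (n + 2) (by simp) (by simp)) ≪≫
      S.moduleCatHomologyIso
  let classOfCocycle : LinearMap.ker S.g.hom →ₗ[R] Abelian.Ext M N (n + 1) :=
    { toFun f := P.extMk (n := n + 1) (Y := N) f.1 (n + 2) rfl f.2
      map_add' f g := (P.add_extMk (n := n + 1) (Y := N) _ _ _ _ _ _).symm
      map_smul' r f := smul_extMk P r _ _ _ }
  have surjective : Function.Surjective classOfCocycle := fun x ↦ by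
    obtain ⟨f, hf, hfx⟩ := P.extMk_surjective x (n + 2) rfl
    exact ⟨⟨f, hf⟩, hfx⟩
  have range_eq_ker : LinearMap.range S.moduleCatToCycles = LinearMap.ker classOfCocycle := by
    ext f
    refine Iff.trans ?_ (P.extMk_eq_zero_iff (n := n + 1) (Y := N) f.1 (n + 2) rfl f.2 n rfl).symm
    exact ⟨fun ⟨g, hg⟩ ↦ ⟨g, congrArg Subtype.val hg⟩, fun ⟨g, hg⟩ ↦ ⟨g, Subtype.ext hg⟩⟩
  exact ⟨homologyIso.toLinearEquiv.trans
    ((Submodule.quotEquivOfEq _ _ range_eq_ker).trans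
      (classOfCocycle.quotKerEquivOfSurjective surjective))⟩

lemma nonempty_extM_linearEquiv_ext (M N : ModuleCat.{u} R) :
    ∀ i, Nonempty (ExtM R M N i ≃ₗ[R] Abelian.Ext M N i)
  | 0 => nonempty_extM_zero_linearEquiv_ext M N
  | n + 1 =>
    have P := ProjectiveResolution.of M
    (nonempty_homology_linearYonedaObj_linearEquiv_ext P N n).map
      (P.isoExt (R := R) (n + 1) N).toLinearEquiv.trans

lemma subsingleton_extM_iff {i : ℕ} :
    Subsingleton (ExtM R M N i) ↔ Subsingleton (Abelian.Ext M N i) :=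
  (nonempty_extM_linearEquiv_ext M N i).some.toEquiv.subsingleton_congr

end ExtComparison

section ExtSequences

variable {A B D N L : Type u} [AddCommGroup A] [Module R A] [AddCommGroup B] [Module R B]
  [AddCommGroup D] [Module R D] [AddCommGroup N] [Module R N] [AddCommGroup L] [Module R L]

variable (A N) in
/-- `Ext_R^i(A, N)` for unbundled modules, in the form for which Mathlib provides Yoneda products
and long exact sequences. -/
abbrev ExtMod (i : ℕ) : Type u := Abelian.Ext (ModuleCat.of R A) (ModuleCat.of R N) i

variable {R}

variable (A N) in
/-- The identification `Ext_R^0(A, N) = Hom_R(A, N)`. -/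
def extModZeroEquiv : ExtMod R A N 0 ≃ₗ[R] (A →ₗ[R] N) :=
  Abelian.Ext.linearEquiv₀.trans ModuleCat.homLinearEquiv

lemma extModZeroEquiv_symm_apply (f : A →ₗ[R] N) :
    (extModZeroEquiv A N).symm f = Abelian.Ext.mk₀ (ModuleCat.ofHom f) := rfl

variable (N) in
/-- The map `Ext_R^n(B, N) → Ext_R^n(A, N)` induced by `f : A → B`. -/
def extPrecomp (f : A →ₗ[R] B) (n : ℕ) : ExtMod R B N n →ₗ[R] ExtMod R A N n :=
  Abelian.Ext.bilinearCompOfLinear R _ _ _ 0 n n (zero_add n)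
    (Abelian.Ext.mk₀ (ModuleCat.ofHom f))

variable (A) in
/-- The map `Ext_R^n(A, N) → Ext_R^n(A, L)` induced by `f : N → L`, as a linear function of `f`. -/
def extPostcomp (n : ℕ) : (N →ₗ[R] L) →ₗ[R] ExtMod R A N n →ₗ[R] ExtMod R A L n :=
  (Abelian.Ext.bilinearCompOfLinear R (ModuleCat.of R A) (ModuleCat.of R N) (ModuleCat.of R L)
    n 0 n (add_zero n)).flip ∘ₗ (extModZeroEquiv N L).symm.toLinearMap

lemma extPrecomp_apply (f : A →ₗ[R] B) {n : ℕ} (x : ExtMod R B N n) :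
    extPrecomp N f n x = (Abelian.Ext.mk₀ (ModuleCat.ofHom f)).comp x (zero_add n) := rfl

lemma extPostcomp_apply (f : N →ₗ[R] L) {n : ℕ} (x : ExtMod R A N n) :
    extPostcomp A n f x = x.comp (Abelian.Ext.mk₀ (ModuleCat.ofHom f)) (add_zero n) := rfl

lemma extPrecomp_comp (f : A →ₗ[R] B) (g : B →ₗ[R] D) (n : ℕ) :
    extPrecomp N (g ∘ₗ f) n = extPrecomp N f n ∘ₗ extPrecomp N g n := by
  ext x
  simp only [extPrecomp_apply, LinearMap.comp_apply, ModuleCat.ofHom_comp]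
  rw [← Abelian.Ext.mk₀_comp_mk₀, Abelian.Ext.comp_assoc_of_second_deg_zero]

lemma extPostcomp_comp (f : B →ₗ[R] N) (g : N →ₗ[R] L) (n : ℕ) :
    extPostcomp A n (g ∘ₗ f) = extPostcomp A n g ∘ₗ extPostcomp A n f := by
  ext x
  simp only [extPostcomp_apply, LinearMap.comp_apply, ModuleCat.ofHom_comp]
  rw [← Abelian.Ext.mk₀_comp_mk₀, Abelian.Ext.comp_assoc_of_third_deg_zero]

lemma extPostcomp_extPostcomp (f : B →ₗ[R] N) (g : N →ₗ[R] L) {n : ℕ} (x : ExtMod R A B n) :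
    extPostcomp A n g (extPostcomp A n f x) = extPostcomp A n (g ∘ₗ f) x := by
  rw [extPostcomp_comp, LinearMap.comp_apply]

lemma extPrecomp_id (n : ℕ) : extPrecomp N (LinearMap.id : A →ₗ[R] A) n = LinearMap.id := by
  ext x
  exact Abelian.Ext.mk₀_id_comp x

lemma extPostcomp_id (n : ℕ) : extPostcomp A n (LinearMap.id : N →ₗ[R] N) = LinearMap.id := by
  ext x
  exact Abelian.Ext.comp_mk₀_id x

lemma extModZeroEquiv_symm_lcomp (f : A →ₗ[R] B) (φ : B →ₗ[R] N) :
    (extModZeroEquiv A N).symm (LinearMap.lcomp R N f φ) =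
      extPrecomp N f 0 ((extModZeroEquiv B N).symm φ) := by
  simp only [extPrecomp_apply, extModZeroEquiv_symm_apply, Abelian.Ext.mk₀_comp_mk₀]
  rfl

lemma extMod_subsingleton_of_projective [Module.Projective R A] {i : ℕ} (hi : 0 < i) :
    Subsingleton (ExtMod R A N i) := by
  obtain ⟨j, rfl⟩ := Nat.exists_eq_succ_of_ne_zero hi.ne'
  have : Projective (ModuleCat.of R A) := (IsProjective.iff_projective _).1 inferInstance
  exact Abelian.Ext.subsingleton_of_projective _ _ _

lemma extMod_subsingleton_of_retract {s : A →ₗ[R] B} {r : B →ₗ[R] A} (hrs : r ∘ₗ s = .id) {i : ℕ}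
    [Subsingleton (ExtMod R B N i)] : Subsingleton (ExtMod R A N i) := by
  refine Function.Injective.subsingleton (f := extPrecomp N r i) <|
    LinearMap.injective_of_comp_eq_id _ (extPrecomp N s i) ?_
  rw [← extPrecomp_comp, hrs, extPrecomp_id]

lemma extMod_subsingleton_congr (e : A ≃ₗ[R] B) {i : ℕ} :
    Subsingleton (ExtMod R A N i) ↔ Subsingleton (ExtMod R B N i) :=
  ⟨fun _ ↦ extMod_subsingleton_of_retract (s := e.symm.toLinearMap) (r := e.toLinearMap) (by simp),
    fun _ ↦ extMod_subsingleton_of_retract (s := e.toLinearMap) (r := e.symm.toLinearMap) (by simp)⟩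

lemma extMod_subsingleton_congr_right (e : N ≃ₗ[R] L) {i : ℕ} :
    Subsingleton (ExtMod R A N i) ↔ Subsingleton (ExtMod R A L i) := by
  have postcomp_injective {N L : Type u} [AddCommGroup N] [Module R N] [AddCommGroup L]
      [Module R L] (e : N ≃ₗ[R] L) : Function.Injective (extPostcomp A i e.toLinearMap) :=
    LinearMap.injective_of_comp_eq_id _ (extPostcomp A i e.symm.toLinearMap) <| by
      rw [← extPostcomp_comp, LinearEquiv.symm_comp, extPostcomp_id]
  exact ⟨fun _ ↦ (postcomp_injective e.symm).subsingleton,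
    fun _ ↦ (postcomp_injective e).subsingleton⟩

/-- `0 → A → B → D → 0` is a short exact sequence of `R`-modules. -/
structure IsShortExact (f : A →ₗ[R] B) (g : B →ₗ[R] D) : Prop where
  injective : Function.Injective f
  exact : Function.Exact f g
  surjective : Function.Surjective g

lemma isShortExact_ker_subtype {g : B →ₗ[R] D} (hg : Function.Surjective g) :
    IsShortExact (LinearMap.ker g).subtype g :=
  ⟨Subtype.val_injective, g.exact_subtype_ker_map, hg⟩

namespace IsShortExact

variable {f : A →ₗ[R] B} {g : B →ₗ[R] D}

/-- A short exact sequence of modules as a `ShortComplex`. -/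
abbrev shortComplex (h : IsShortExact f g) : ShortComplex (ModuleCat.{u} R) :=
  .mk (ModuleCat.ofHom f) (ModuleCat.ofHom g) (ModuleCat.hom_ext h.exact.linearMap_comp_eq_zero)

lemma shortExact (h : IsShortExact f g) : h.shortComplex.ShortExact :=
  ModuleCat.shortComplex_shortExact _ h.exact h.injective h.surjective

variable (N) in
/-- The connecting map `Ext_R^n(A, N) → Ext_R^{n+1}(D, N)` of `0 → A → B → D → 0`. -/
def extConnecting (h : IsShortExact f g) (n : ℕ) : ExtMod R A N n →ₗ[R] ExtMod R D N (n + 1) :=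
  Abelian.Ext.bilinearCompOfLinear R _ _ _ 1 n (n + 1) (add_comm 1 n) h.shortExact.extClass

lemma exact_extPrecomp_extPrecomp (h : IsShortExact f g) (n : ℕ) :
    Function.Exact (extPrecomp N g n) (extPrecomp N f n) := by
  refine fun x ↦ ⟨Abelian.Ext.contravariant_sequence_exact₂ h.shortExact _ x, ?_⟩
  rintro ⟨y, rfl⟩
  rw [← LinearMap.comp_apply, ← extPrecomp_comp, h.exact.linearMap_comp_eq_zero]
  simp [extPrecomp_apply]

lemma exact_extPrecomp_extConnecting (h : IsShortExact f g) (n : ℕ) :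
    Function.Exact (extPrecomp N f n) (h.extConnecting N n) := by
  refine fun x ↦ ⟨Abelian.Ext.contravariant_sequence_exact₁ h.shortExact _ x (add_comm 1 n), ?_⟩
  rintro ⟨y, rfl⟩
  change h.shortExact.extClass.comp
    ((Abelian.Ext.mk₀ h.shortComplex.f).comp y (zero_add n)) (add_comm 1 n) = 0
  rw [← Abelian.Ext.comp_assoc_of_second_deg_zero, h.shortExact.extClass_comp,
    Abelian.Ext.zero_comp]

lemma exact_extConnecting_extPrecomp (h : IsShortExact f g) (n : ℕ) :
    Function.Exact (h.extConnecting N n) (extPrecomp N g (n + 1)) := by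
  refine fun x ↦
    ⟨fun hx ↦ Abelian.Ext.contravariant_sequence_exact₃ h.shortExact _ x hx (add_comm 1 n), ?_⟩
  rintro ⟨y, rfl⟩
  change (Abelian.Ext.mk₀ h.shortComplex.g).comp
    (h.shortExact.extClass.comp y (add_comm 1 n)) (zero_add (n + 1)) = 0
  rw [← Abelian.Ext.comp_assoc _ _ _ (zero_add 1) (add_comm 1 n) (by omega),
    h.shortExact.comp_extClass, Abelian.Ext.zero_comp]

lemma exact_extPostcomp_extPostcomp (h : IsShortExact f g) (n : ℕ) :
    Function.Exact (extPostcomp L n f) (extPostcomp L n g) := by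
  refine fun x ↦ ⟨Abelian.Ext.covariant_sequence_exact₂ _ h.shortExact x, ?_⟩
  rintro ⟨y, rfl⟩
  rw [extPostcomp_extPostcomp, h.exact.linearMap_comp_eq_zero, map_zero, LinearMap.zero_apply]

lemma extPostcomp_injective (h : IsShortExact f g) {n : ℕ}
    (hL : ∀ i < n, Subsingleton (ExtMod R L D i)) : Function.Injective (extPostcomp L n f) := by
  cases n with
  | zero =>
    have : Mono (ModuleCat.ofHom f) := (ModuleCat.mono_iff_injective _).2 h.injective
    exact Abelian.Ext.postcomp_mk₀_injective_of_mono _ (ModuleCat.ofHom f)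
  | succ n =>
    have := hL n n.lt_succ_self
    refine (injective_iff_map_eq_zero _).2 fun x hx ↦ ?_
    obtain ⟨y, rfl⟩ := Abelian.Ext.covariant_sequence_exact₁ _ h.shortExact x hx rfl
    rw [Subsingleton.elim y 0, Abelian.Ext.zero_comp]

end IsShortExact

end ExtSequences

section ExtConsequences

variable {R}
variable {A B D N : Type u} [AddCommGroup A] [Module R A] [AddCommGroup B] [Module R B]
  [AddCommGroup D] [Module R D] [AddCommGroup N] [Module R N]

lemma subsingleton_of_exact {f : A →ₗ[R] B} {g : B →ₗ[R] D} (h : Function.Exact f g)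
    [Subsingleton A] [Subsingleton D] : Subsingleton B :=
  subsingleton_of_forall_eq 0 fun x ↦ by
    obtain ⟨y, rfl⟩ := (h x).1 (Subsingleton.elim _ _)
    rw [Subsingleton.elim y 0, map_zero]

namespace IsShortExact

variable {f : A →ₗ[R] B} {g : B →ₗ[R] D}

lemma extMod_subsingleton_left (h : IsShortExact f g) (n : ℕ)
    [Subsingleton (ExtMod R B N n)] [Subsingleton (ExtMod R D N (n + 1))] :
    Subsingleton (ExtMod R A N n) :=
  subsingleton_of_exact (h.exact_extPrecomp_extConnecting n)

lemma extMod_subsingleton_middle (h : IsShortExact f g) (n : ℕ)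
    [Subsingleton (ExtMod R A N n)] [Subsingleton (ExtMod R D N n)] :
    Subsingleton (ExtMod R B N n) :=
  subsingleton_of_exact (h.exact_extPrecomp_extPrecomp n)

lemma extMod_subsingleton_right (h : IsShortExact f g) (n : ℕ)
    [Subsingleton (ExtMod R A N n)] [Subsingleton (ExtMod R B N (n + 1))] :
    Subsingleton (ExtMod R D N (n + 1)) :=
  subsingleton_of_exact (h.exact_extConnecting_extPrecomp n)

lemma extConnecting_surjective (h : IsShortExact f g) (n : ℕ)
    [Subsingleton (ExtMod R B N (n + 1))] : Function.Surjective (h.extConnecting N n) :=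
  fun x ↦ (h.exact_extConnecting_extPrecomp n x).1 (Subsingleton.elim _ _)

variable (N) in
/-- Dimension shifting: `Ext_R^n(A, N) = Ext_R^{n+1}(D, N)` for `0 → A → B → D → 0` with
`Ext_R^n(B, N) = Ext_R^{n+1}(B, N) = 0`. -/
def extShift (h : IsShortExact f g) (n : ℕ) [Subsingleton (ExtMod R B N n)]
    [Subsingleton (ExtMod R B N (n + 1))] : ExtMod R A N n ≃ₗ[R] ExtMod R D N (n + 1) :=
  .ofBijective (h.extConnecting N n) ⟨(injective_iff_map_eq_zero _).2 fun x hx ↦ by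
    obtain ⟨y, rfl⟩ := (h.exact_extPrecomp_extConnecting n x).1 hx
    rw [Subsingleton.elim y 0, map_zero], h.extConnecting_surjective n⟩

variable (N) in
/-- The connecting map `Hom_R(A, N) → Ext_R^1(D, N)` of `0 → A → B → D → 0`. -/
def homConnecting (h : IsShortExact f g) : (A →ₗ[R] N) →ₗ[R] ExtMod R D N 1 :=
  h.extConnecting N 0 ∘ₗ (extModZeroEquiv A N).symm.toLinearMap

lemma exact_lcomp_homConnecting (h : IsShortExact f g) :
    Function.Exact (LinearMap.lcomp R N f) (h.homConnecting N) := by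
  intro φ
  refine (h.exact_extPrecomp_extConnecting 0 ((extModZeroEquiv A N).symm φ)).trans ?_
  rw [Set.mem_range, (extModZeroEquiv B N).symm.surjective.exists]
  simp only [← extModZeroEquiv_symm_lcomp, EmbeddingLike.apply_eq_iff_eq, Set.mem_range]

lemma homConnecting_surjective (h : IsShortExact f g) [Subsingleton (ExtMod R B N 1)] :
    Function.Surjective (h.homConnecting N) :=
  (h.extConnecting_surjective 0).comp (extModZeroEquiv A N).symm.surjective

lemma lcomp_surjective (h : IsShortExact f g) [Subsingleton (ExtMod R D N 1)] :
    Function.Surjective (LinearMap.lcomp R N f) :=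
  fun φ ↦ (h.exact_lcomp_homConnecting φ).1 (Subsingleton.elim _ _)

lemma extMod_one_subsingleton_of_lcomp_surjective (h : IsShortExact f g)
    [Subsingleton (ExtMod R B N 1)] (hf : Function.Surjective (LinearMap.lcomp R N f)) :
    Subsingleton (ExtMod R D N 1) :=
  subsingleton_of_forall_eq 0 fun x ↦ by
    obtain ⟨φ, rfl⟩ := h.homConnecting_surjective x
    exact (h.exact_lcomp_homConnecting φ).2 (hf φ)

lemma dual (h : IsShortExact f g) [Subsingleton (ExtMod R D N 1)] :
    IsShortExact (LinearMap.lcomp R N g) (LinearMap.lcomp R N f) :=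
  ⟨LinearMap.lcomp_injective_of_surjective g h.surjective,
    LinearMap.exact_lcomp_of_exact_of_surjective _ h.exact h.surjective, h.lcomp_surjective⟩

end IsShortExact

end ExtConsequences

section TotallyReflexive

variable {R}
variable {A B C D X : Type u} [AddCommGroup A] [Module R A] [AddCommGroup B] [Module R B]
  [AddCommGroup C] [Module R C] [AddCommGroup D] [Module R D] [AddCommGroup X] [Module R X]

variable (R C X) in
/-- The biduality map `X → Hom_R(Hom_R(X, C), C)` for unbundled modules. -/
abbrev bidual : X →ₗ[R] (X →ₗ[R] C) →ₗ[R] C := bidualityMap R (.of R C) (.of R X)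

lemma isTotallyCReflexive_iff :
    IsTotallyCReflexive R (.of R C) (.of R X) ↔ Module.Finite R X ∧
      Function.Bijective (bidual R C X) ∧ (∀ i, 0 < i → Subsingleton (ExtMod R X C i)) ∧
      ∀ i, 0 < i → Subsingleton (ExtMod R (X →ₗ[R] C) C i) := by
  simp only [IsTotallyCReflexive, subsingleton_extM_iff]

namespace IsTotallyCReflexive

lemma finite (h : IsTotallyCReflexive R (.of R C) (.of R X)) : Module.Finite R X := h.1

lemma bijective_bidual (h : IsTotallyCReflexive R (.of R C) (.of R X)) :
    Function.Bijective (bidual R C X) := h.2.1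

lemma extMod_subsingleton (h : IsTotallyCReflexive R (.of R C) (.of R X)) (i : ℕ) :
    Subsingleton (ExtMod R X C (i + 1)) :=
  (isTotallyCReflexive_iff.1 h).2.2.1 _ i.succ_pos

lemma extMod_dual_subsingleton (h : IsTotallyCReflexive R (.of R C) (.of R X)) (i : ℕ) :
    Subsingleton (ExtMod R (X →ₗ[R] C) C (i + 1)) :=
  (isTotallyCReflexive_iff.1 h).2.2.2 _ i.succ_pos

lemma of_retract {s : A →ₗ[R] B} {r : B →ₗ[R] A} (hrs : r ∘ₗ s = .id)
    (hB : IsTotallyCReflexive R (.of R C) (.of R B)) :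
    IsTotallyCReflexive R (.of R C) (.of R A) := by
  have := hB.finite
  have hsr : LinearMap.lcomp R C s ∘ₗ LinearMap.lcomp R C r = .id := by
    ext φ a
    exact congrArg φ (LinearMap.congr_fun hrs a)
  refine isTotallyCReflexive_iff.2
    ⟨.of_surjective r (LinearMap.surjective_of_comp_eq_id _ _ hrs), ?_, fun i hi ↦ ?_,
      fun i hi ↦ ?_⟩
  · let s' := LinearMap.lcomp R C (LinearMap.lcomp R C s)
    let r' := LinearMap.lcomp R C (LinearMap.lcomp R C r)
    have injective : Function.Injective (s' ∘ bidual R C A) :=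
      hB.bijective_bidual.injective.comp (LinearMap.injective_of_comp_eq_id _ _ hrs)
    have surjective : Function.Surjective (bidual R C A ∘ r) := by
      have hr' : Function.Surjective r' := LinearMap.surjective_of_comp_eq_id s' _ <| by
        ext Φ φ
        exact congrArg Φ (LinearMap.congr_fun hsr φ)
      exact hr'.comp hB.bijective_bidual.surjective
    exact ⟨injective.of_comp, surjective.of_comp⟩
  · have := (isTotallyCReflexive_iff.1 hB).2.2.1 i hi
    exact extMod_subsingleton_of_retract hrs
  · have := (isTotallyCReflexive_iff.1 hB).2.2.2 i hi
    exact extMod_subsingleton_of_retract hsr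

lemma congr (e : A ≃ₗ[R] B) (hA : IsTotallyCReflexive R (.of R C) (.of R A)) :
    IsTotallyCReflexive R (.of R C) (.of R B) :=
  hA.of_retract (s := e.symm.toLinearMap) (r := e.toLinearMap) (by simp)

lemma of_isShortExact {f : A →ₗ[R] B} {g : B →ₗ[R] D} (h : IsShortExact f g)
    (hA : IsTotallyCReflexive R (.of R C) (.of R A))
    (hD : IsTotallyCReflexive R (.of R C) (.of R D)) :
    IsTotallyCReflexive R (.of R C) (.of R B) := by
  have := hD.extMod_subsingleton 0
  have := hA.extMod_dual_subsingleton 0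
  have bidual_exact := (h.dual (N := C)).dual (N := C)
  refine isTotallyCReflexive_iff.2 ⟨?_, ?_, fun i hi ↦ ?_, fun i hi ↦ ?_⟩
  · have := hA.finite
    have := hD.finite
    exact Module.Finite.of_exact h.exact h.surjective
  · exact LinearMap.bijective_of_surjective_of_bijective_of_bijective_of_injective
      (0 : PUnit →ₗ[R] A) f g (0 : D →ₗ[R] PUnit) (0 : PUnit →ₗ[R] _)
      (LinearMap.lcomp R C (LinearMap.lcomp R C f)) (LinearMap.lcomp R C (LinearMap.lcomp R C g))
      (0 : _ →ₗ[R] PUnit) (0 : PUnit →ₗ[R] PUnit) (bidual R C A) (bidual R C B) (bidual R C D)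
      (0 : PUnit →ₗ[R] PUnit) (by simp) rfl rfl rfl
      ((LinearMap.exact_zero_iff_injective _ _).2 h.injective) h.exact
      ((LinearMap.exact_zero_iff_surjective _ _).2 h.surjective)
      ((LinearMap.exact_zero_iff_injective _ _).2 bidual_exact.injective) bidual_exact.exact
      ((LinearMap.exact_zero_iff_surjective _ _).2 bidual_exact.surjective)
      (fun x ↦ ⟨x, rfl⟩) hA.bijective_bidual hD.bijective_bidual fun x y _ ↦ rfl
  · have := (isTotallyCReflexive_iff.1 hA).2.2.1 i hi
    have := (isTotallyCReflexive_iff.1 hD).2.2.1 i hi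
    exact h.extMod_subsingleton_middle i
  · have := (isTotallyCReflexive_iff.1 hA).2.2.2 i hi
    have := (isTotallyCReflexive_iff.1 hD).2.2.2 i hi
    exact h.dual.extMod_subsingleton_middle i

lemma prod (hA : IsTotallyCReflexive R (.of R C) (.of R A))
    (hB : IsTotallyCReflexive R (.of R C) (.of R B)) :
    IsTotallyCReflexive R (.of R C) (.of R (A × B)) :=
  of_isShortExact ⟨LinearMap.inl_injective, .inl_snd, LinearMap.snd_surjective⟩ hA hB

lemma of_isShortExact_left [IsNoetherianRing R] {f : A →ₗ[R] B} {g : B →ₗ[R] D}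
    (h : IsShortExact f g) (hB : IsTotallyCReflexive R (.of R C) (.of R B))
    (hD : IsTotallyCReflexive R (.of R C) (.of R D)) :
    IsTotallyCReflexive R (.of R C) (.of R A) := by
  have := hD.extMod_subsingleton 0
  have dual_exact := h.dual (N := C)
  have surjective_bidual_map : Function.Surjective
      (LinearMap.lcomp R C (LinearMap.lcomp R C g)) := by
    refine .of_comp (g := bidual R C B) ?_
    exact hD.bijective_bidual.surjective.comp h.surjective
  refine isTotallyCReflexive_iff.2 ⟨?_, ?_, fun i hi ↦ ?_, fun i hi ↦ ?_⟩
  · have := hB.finite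
    exact .of_injective f h.injective
  · exact LinearMap.bijective_of_bijective_of_injective_of_left_exact f g
      (LinearMap.lcomp R C (LinearMap.lcomp R C f)) (LinearMap.lcomp R C (LinearMap.lcomp R C g))
      (bidual R C A) (bidual R C B) (bidual R C D) rfl rfl h.exact
      (LinearMap.exact_lcomp_of_exact_of_surjective _ dual_exact.exact dual_exact.surjective)
      hB.bijective_bidual hD.bijective_bidual.injective h.injective
      (LinearMap.lcomp_injective_of_surjective _ dual_exact.surjective)
  · have := (isTotallyCReflexive_iff.1 hB).2.2.1 i hi
    have := hD.extMod_subsingleton i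
    exact h.extMod_subsingleton_left i
  · obtain _ | _ | i := i
    · contradiction
    · have := hB.extMod_dual_subsingleton 0
      exact dual_exact.extMod_one_subsingleton_of_lcomp_surjective surjective_bidual_map
    · have := hD.extMod_dual_subsingleton i
      have := hB.extMod_dual_subsingleton (i + 1)
      exact dual_exact.extMod_subsingleton_right (i + 1)

end IsTotallyCReflexive

namespace IsSemidualizing

lemma isTotallyCReflexive_self (hC : IsSemidualizing R (.of R C)) :
    IsTotallyCReflexive R (.of R C) (.of R R) := by
  obtain ⟨-, hom_bijective, ext_subsingleton⟩ := hC
  let evalOne : (R →ₗ[R] C) ≃ₗ[R] C := LinearMap.ringLmapEquivSelf R R C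
  refine isTotallyCReflexive_iff.2 ⟨inferInstance, ?_, fun i hi ↦ ?_, fun i hi ↦ ?_⟩
  · convert (evalOne.congrLeft C R).symm.bijective.comp hom_bijective
    ext r φ
    change φ r = r • φ 1
    rw [← map_smul, smul_eq_mul, mul_one]
  · exact extMod_subsingleton_of_projective hi
  · exact (extMod_subsingleton_congr evalOne).2 (subsingleton_extM_iff.1 (ext_subsingleton i hi))

variable {P : Type u} [AddCommGroup P] [Module R P] [Module.Finite R P] [Module.Projective R P]

lemma isTotallyCReflexive_pi (hC : IsSemidualizing R (.of R C)) (n : ℕ) :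
    IsTotallyCReflexive R (.of R C) (.of R (Fin n → R)) :=
  Module.pi_induction' R (motive := fun N _ _ ↦ IsTotallyCReflexive R (.of R C) (.of R N))
    (motive' := fun N _ _ ↦ IsTotallyCReflexive R (.of R C) (.of R N)) (fun e h ↦ h.congr e)
    (fun e h ↦ h.congr e)
    (hC.isTotallyCReflexive_self.of_retract (s := 0) (r := 0) (Subsingleton.elim _ _))
    (fun h h' ↦ h.prod h') (fun _ ↦ R) fun _ ↦ hC.isTotallyCReflexive_self

lemma isTotallyCReflexive_of_projective (hC : IsSemidualizing R (.of R C)) :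
    IsTotallyCReflexive R (.of R C) (.of R P) := by
  obtain ⟨n, r, s, -, -, hrs⟩ := Module.Finite.exists_comp_eq_id_of_projective R P
  exact (hC.isTotallyCReflexive_pi n).of_retract hrs

end IsSemidualizing

end TotallyReflexive

section GCDimension

variable {R}
variable {A B C D K P X : Type u} [AddCommGroup A] [Module R A] [AddCommGroup B] [Module R B]
  [AddCommGroup C] [Module R C] [AddCommGroup D] [Module R D] [AddCommGroup K] [Module R K]
  [AddCommGroup P] [Module R P] [AddCommGroup X] [Module R X]

namespace IsShortExact

lemma exists_comp_eq {f : A →ₗ[R] B} {g : B →ₗ[R] D} (h : IsShortExact f g)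
    {u : X →ₗ[R] B} (hu : g ∘ₗ u = 0) : ∃ v : X →ₗ[R] A, f ∘ₗ v = u :=
  ⟨u.codRestrictOfInjective f h.injective fun x ↦ (h.exact _).1 (LinearMap.congr_fun hu x),
    LinearMap.codRestrictOfInjective_comp ..⟩

lemma exists_isShortExact_ker_comp {f : A →ₗ[R] B} {g : B →ₗ[R] D} (h : IsShortExact f g)
    {i : K →ₗ[R] X} {p : X →ₗ[R] B} (hp : IsShortExact i p) :
    ∃ (j : K →ₗ[R] LinearMap.ker (g ∘ₗ p)) (q : LinearMap.ker (g ∘ₗ p) →ₗ[R] A),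
      IsShortExact j q := by
  have ker_exact := isShortExact_ker_subtype (h.surjective.comp hp.surjective) (g := g ∘ₗ p)
  obtain ⟨q, hq⟩ := h.exists_comp_eq (u := p ∘ₗ (LinearMap.ker (g ∘ₗ p)).subtype)
    ker_exact.exact.linearMap_comp_eq_zero
  obtain ⟨j, hj⟩ := ker_exact.exists_comp_eq (u := i) (by
    rw [LinearMap.comp_assoc, hp.exact.linearMap_comp_eq_zero, LinearMap.comp_zero])
  have hq_apply (z : LinearMap.ker (g ∘ₗ p)) : f (q z) = p z := LinearMap.congr_fun hq z
  have hj_apply (y : K) : (j y : X) = i y := LinearMap.congr_fun hj y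
  refine ⟨j, q, fun x y hxy ↦ ?_, fun z ↦ ?_, fun a ↦ ?_⟩
  · exact hp.injective (by rw [← hj_apply, hxy, hj_apply])
  · rw [← map_eq_zero_iff f h.injective, hq_apply, hp.exact]
    simp only [Set.mem_range, Subtype.ext_iff, hj_apply]
  · obtain ⟨x, hx⟩ := hp.surjective (f a)
    refine ⟨⟨x, ?_⟩, h.injective ?_⟩
    · rw [LinearMap.mem_ker, LinearMap.comp_apply, hx, h.exact.apply_apply_eq_zero]
    · rw [hq_apply, hx]

-- As in the Schanuel lemma, `D × P` is the pullback of `g` and `p`, with split projection to `P`.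
lemma exists_isShortExact_prod {f : K →ₗ[R] P} {g : P →ₗ[R] A} (h : IsShortExact f g)
    [Module.Projective R P] {i : D →ₗ[R] X} {p : X →ₗ[R] A} (hp : IsShortExact i p) :
    ∃ (j : K →ₗ[R] D × P) (q : D × P →ₗ[R] X), IsShortExact j q := by
  obtain ⟨φ, hφ⟩ := Module.projective_lifting_property p g hp.surjective
  obtain ⟨ψ, hψ⟩ := hp.exists_comp_eq (u := φ ∘ₗ f) (by
    rw [← LinearMap.comp_assoc, hφ, h.exact.linearMap_comp_eq_zero])
  have hψ_apply (x : K) : i (ψ x) = φ (f x) := LinearMap.congr_fun hψ x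
  have hφ_apply (x : P) : p (φ x) = g x := LinearMap.congr_fun hφ x
  refine ⟨ψ.prod f, (-i).coprod φ, fun x y hxy ↦ h.injective (congrArg Prod.snd hxy), ?_,
    fun x ↦ ?_⟩
  · rintro ⟨d, y⟩
    simp only [LinearMap.coprod_apply, LinearMap.neg_apply, neg_add_eq_zero, Set.mem_range,
      LinearMap.prod_apply, Function.prod_apply, Prod.mk.injEq]
    constructor
    · intro hdy
      obtain ⟨x, rfl⟩ := (h.exact y).1 (by rw [← hφ_apply, ← hdy, hp.exact.apply_apply_eq_zero])
      exact ⟨x, hp.injective (by rw [hψ_apply, hdy]), rfl⟩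
    · rintro ⟨x, rfl, rfl⟩
      exact hψ_apply x
  · obtain ⟨y, hy⟩ := h.surjective (p x)
    obtain ⟨d, hd⟩ := (hp.exact (φ y - x)).1 (by rw [map_sub, hφ_apply, hy, sub_self])
    exact ⟨(d, y), by simp [hd]⟩

end IsShortExact

namespace gcdimLE

lemma succ_of_isShortExact {k : ℕ} {f : K →ₗ[R] X} {g : X →ₗ[R] A} (h : IsShortExact f g)
    (hX : IsTotallyCReflexive R (.of R C) (.of R X)) (hK : gcdimLE R (.of R C) k (.of R K)) :
    gcdimLE R (.of R C) (k + 1) (.of R A) :=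
  ⟨.of R X, .of R K, f, g, h.injective, h.surjective, h.exact.linearMap_ker_eq, hX, hK⟩

lemma exists_isShortExact {k : ℕ} (h : gcdimLE R (.of R C) (k + 1) (.of R A)) :
    ∃ (X K : ModuleCat.{u} R) (f : K →ₗ[R] X) (g : X →ₗ[R] A), IsShortExact f g ∧
      IsTotallyCReflexive R (.of R C) (.of R X) ∧ gcdimLE R (.of R C) k (.of R K) := by
  obtain ⟨X, K, f, g, hf, hg, hfg, hX, hK⟩ := h
  exact ⟨X, K, f, g, ⟨hf, LinearMap.exact_iff.2 hfg, hg⟩, hX, hK⟩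

lemma prod {k : ℕ} (hA : gcdimLE R (.of R C) k (.of R A))
    (hB : IsTotallyCReflexive R (.of R C) (.of R B)) : gcdimLE R (.of R C) k (.of R (A × B)) := by
  cases k with
  | zero => exact IsTotallyCReflexive.prod hA hB
  | succ k =>
    obtain ⟨X, K, f, g, h, hX, hK⟩ := hA.exists_isShortExact
    refine succ_of_isShortExact (f := LinearMap.inl R X B ∘ₗ f) (g := g.prodMap .id)
      ⟨LinearMap.inl_injective.comp h.injective, ?_, h.surjective.prodMap Function.surjective_id⟩
      (hX.prod hB) hK
    rintro ⟨x, b⟩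
    change (g x, b) = 0 ↔ ∃ y, (f y, (0 : B)) = (x, b)
    simp only [Prod.mk_eq_zero, h.exact x, Set.mem_range, Prod.mk.injEq, exists_and_right,
      eq_comm (a := b)]

variable [IsNoetherianRing R]

lemma of_isShortExact_left {k : ℕ} {f : A →ₗ[R] B} {g : B →ₗ[R] D} (h : IsShortExact f g)
    (hB : gcdimLE R (.of R C) k (.of R B)) (hD : IsTotallyCReflexive R (.of R C) (.of R D)) :
    gcdimLE R (.of R C) k (.of R A) := by
  cases k with
  | zero => exact IsTotallyCReflexive.of_isShortExact_left h hB hD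
  | succ k =>
    obtain ⟨X, K, i, p, hp, hX, hK⟩ := hB.exists_isShortExact
    obtain ⟨j, q, hjq⟩ := h.exists_isShortExact_ker_comp hp
    have ker_exact := isShortExact_ker_subtype (h.surjective.comp hp.surjective) (g := g ∘ₗ p)
    exact succ_of_isShortExact hjq (.of_isShortExact_left ker_exact hX hD) hK

lemma of_isShortExact_projective {k : ℕ} {f : K →ₗ[R] P} {g : P →ₗ[R] A} (h : IsShortExact f g)
    [Module.Projective R P] (hP : IsTotallyCReflexive R (.of R C) (.of R P))
    (hA : gcdimLE R (.of R C) (k + 1) (.of R A)) : gcdimLE R (.of R C) k (.of R K) := by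
  obtain ⟨X, L, i, p, hp, hX, hL⟩ := hA.exists_isShortExact
  obtain ⟨j, q, hjq⟩ := h.exists_isShortExact_prod hp
  exact of_isShortExact_left hjq (hL.prod hP) hX

end gcdimLE

end GCDimension

section Transpose

variable {R}
variable {A B C D K L M P₀ P₁ P₂ : Type u} [AddCommGroup A] [Module R A] [AddCommGroup B]
  [Module R B] [AddCommGroup C] [Module R C] [AddCommGroup D] [Module R D] [AddCommGroup K]
  [Module R K] [AddCommGroup L] [Module R L] [AddCommGroup M] [Module R M] [AddCommGroup P₀]
  [Module R P₀] [AddCommGroup P₁] [Module R P₁] [AddCommGroup P₂] [Module R P₂]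

lemma exists_isShortExact_coker_comp {α : A →ₗ[R] B} {β : B →ₗ[R] D} {γ : A →ₗ[R] D}
    (hβ : Function.Injective β) (hγ : β ∘ₗ α = γ) :
    ∃ (f : (B ⧸ LinearMap.range α) →ₗ[R] D ⧸ LinearMap.range γ)
      (g : (D ⧸ LinearMap.range γ) →ₗ[R] D ⧸ LinearMap.range β), IsShortExact f g := by
  subst hγ
  refine ⟨(LinearMap.range α).mapQ _ β
      (Submodule.map_le_iff_le_comap.1 (LinearMap.range_comp α β).ge),
    Submodule.factor (LinearMap.range_comp_le_range α β), ?_, ?_, Submodule.factor_surjective _⟩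
  · rw [← LinearMap.ker_eq_bot, Submodule.ker_mapQ, LinearMap.range_comp,
      Submodule.comap_map_eq_of_injective hβ, Submodule.mkQ_map_self]
  · rw [LinearMap.exact_iff, Submodule.factor, Submodule.ker_mapQ, Submodule.range_mapQ,
      Submodule.comap_id]

lemma isShortExact_coker_of_exact {α : A →ₗ[R] B} {β : B →ₗ[R] D} (h : Function.Exact α β) :
    IsShortExact ((LinearMap.range α).liftQ β h.linearMap_ker_eq.ge)
      (LinearMap.range β).mkQ := by
  refine ⟨?_, ?_, Submodule.mkQ_surjective _⟩
  · exact LinearMap.ker_eq_bot.1 (Submodule.ker_liftQ_eq_bot _ _ _ h.linearMap_ker_eq.le)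
  · rw [LinearMap.exact_iff, Submodule.ker_mkQ, Submodule.range_liftQ]

variable (C) in
/-- The cokernel of the dual `d^C : P₀^C → P₁^C` of a map `d`. For a projective presentation
`P₁ → P₀ → M → 0` with first map `d` this is the transpose `Tr_C(M)`. -/
abbrev DualCokernel (d : P₁ →ₗ[R] P₀) : Type u :=
  (P₁ →ₗ[R] C) ⧸ LinearMap.range (LinearMap.lcomp R C d)

namespace DualCokernel

lemma exists_mem_ker_forall_mk_eq {d : P₁ →ₗ[R] P₀} (hP₀ : Function.Injective (bidual R C P₀))
    (hP₁ : Function.Surjective (bidual R C P₁)) (φ : DualCokernel C d →ₗ[R] C) :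
    ∃ x ∈ LinearMap.ker d, ∀ ψ : P₁ →ₗ[R] C, φ (Submodule.Quotient.mk ψ) = ψ x := by
  obtain ⟨x, hx⟩ := hP₁ (φ ∘ₗ Submodule.mkQ _)
  have hx_apply (ψ : P₁ →ₗ[R] C) : φ (Submodule.Quotient.mk ψ) = ψ x :=
    (LinearMap.congr_fun hx ψ).symm
  refine ⟨x, (map_eq_zero_iff _ hP₀).1 <| LinearMap.ext fun ψ ↦ ?_, hx_apply⟩
  have mk_eq_zero : (Submodule.Quotient.mk (LinearMap.lcomp R C d ψ) : DualCokernel C d) = 0 :=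
    (Submodule.Quotient.mk_eq_zero _).2 (LinearMap.mem_range_self _ ψ)
  exact (hx_apply _).symm.trans (by rw [mk_eq_zero, map_zero])

lemma subsingleton_hom {ι : K →ₗ[R] P₀} (hι : Function.Injective ι)
    (hP₀ : Function.Injective (bidual R C P₀)) (hK : Function.Surjective (bidual R C K)) :
    Subsingleton (DualCokernel C ι →ₗ[R] C) :=
  subsingleton_of_forall_eq 0 fun φ ↦ by
    obtain ⟨x, hx, hφ⟩ := exists_mem_ker_forall_mk_eq hP₀ hK φ
    have hx_zero : x = 0 := (map_eq_zero_iff ι hι).1 hx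
    refine Submodule.linearMap_qext _ (LinearMap.ext fun ψ ↦ (hφ ψ).trans ?_)
    rw [hx_zero, map_zero, LinearMap.zero_comp, LinearMap.zero_apply]

/-- `Ext_R^1(M, C)` is the cokernel of `P₀^C → K^C` for `0 → K → P₀ → M → 0` with
`Ext_R^1(P₀, C) = 0`. -/
def equivExtOne {ι : K →ₗ[R] P₀} {p : P₀ →ₗ[R] M} (h : IsShortExact ι p)
    [Subsingleton (ExtMod R P₀ C 1)] : DualCokernel C ι ≃ₗ[R] ExtMod R M C 1 :=
  h.exact_lcomp_homConnecting.linearEquivOfSurjective h.homConnecting_surjective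

/-- If `0 → L → P₁ → K → 0` is exact and `Ext_R^1(K, C) = 0`, then the cokernel of `K^C → P₁^C`
is `L^C`. -/
def equivDualKer {i : L →ₗ[R] P₁} {d : P₁ →ₗ[R] K} (h : IsShortExact i d)
    [Subsingleton (ExtMod R K C 1)] : DualCokernel C d ≃ₗ[R] (L →ₗ[R] C) :=
  h.dual.exact.linearEquivOfSurjective h.dual.surjective

lemma extMod_subsingleton_of_surjective [IsNoetherianRing R] {d : P₁ →ₗ[R] K}
    (hd : Function.Surjective d) (hP₁ : IsTotallyCReflexive R (.of R C) (.of R P₁))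
    (hK : IsTotallyCReflexive R (.of R C) (.of R K)) (i : ℕ) :
    Subsingleton (ExtMod R (DualCokernel C d) C (i + 1)) := by
  have := hK.extMod_subsingleton 0
  have ker_exact := isShortExact_ker_subtype hd
  exact (extMod_subsingleton_congr (equivDualKer ker_exact)).2
    ((IsTotallyCReflexive.of_isShortExact_left ker_exact hP₁ hK).extMod_dual_subsingleton i)

lemma extMod_subsingleton_comp_iff [IsNoetherianRing R] (ι : K →ₗ[R] P₀) {d : P₁ →ₗ[R] K}
    (hd : Function.Surjective d) (hP₁ : IsTotallyCReflexive R (.of R C) (.of R P₁))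
    (hK : IsTotallyCReflexive R (.of R C) (.of R K)) (i : ℕ) :
    Subsingleton (ExtMod R (DualCokernel C (ι ∘ₗ d)) C (i + 1)) ↔
      Subsingleton (ExtMod R (DualCokernel C ι) C (i + 1)) := by
  obtain ⟨f, g, h⟩ := exists_isShortExact_coker_comp (α := LinearMap.lcomp R C ι)
    (γ := LinearMap.lcomp R C (ι ∘ₗ d)) (LinearMap.lcomp_injective_of_surjective d hd) rfl
  have ext_zero := extMod_subsingleton_of_surjective hd hP₁ hK
  have := ext_zero i
  have := ext_zero (i + 1)
  exact ⟨fun _ ↦ h.extMod_subsingleton_left (i + 1), fun _ ↦ h.extMod_subsingleton_middle (i + 1)⟩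

lemma exact_lcomp_lcomp {ι : K →ₗ[R] P₀} {p : P₀ →ₗ[R] M} (h : IsShortExact ι p)
    [Subsingleton (ExtMod R M C 1)] {d : P₁ →ₗ[R] K} (hd : Function.Surjective d)
    {d₂ : P₂ →ₗ[R] P₁} (hd₂ : Function.Exact d₂ d) :
    Function.Exact (LinearMap.lcomp R C (ι ∘ₗ d)) (LinearMap.lcomp R C d₂) :=
  h.lcomp_surjective.comp_exact_iff_exact.2 <|
    LinearMap.exact_lcomp_of_exact_of_surjective _ hd₂ hd

variable {d₂ : P₂ →ₗ[R] P₁} {d : P₁ →ₗ[R] P₀}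

lemma extMod_subsingleton_succ_iff
    (h : Function.Exact (LinearMap.lcomp R C d) (LinearMap.lcomp R C d₂))
    (hP₂ : IsTotallyCReflexive R (.of R C) (.of R P₂)) (i : ℕ) :
    Subsingleton (ExtMod R (DualCokernel C d₂) C (i + 2)) ↔
      Subsingleton (ExtMod R (DualCokernel C d) C (i + 1)) := by
  have := hP₂.extMod_dual_subsingleton i
  have := hP₂.extMod_dual_subsingleton (i + 1)
  exact ((isShortExact_coker_of_exact h).extShift C (i + 1)).toEquiv.subsingleton_congr.symm

lemma extMod_one_subsingleton
    (h : Function.Exact (LinearMap.lcomp R C d) (LinearMap.lcomp R C d₂))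
    (hd : Function.Exact d₂ d) (hP₀ : Function.Injective (bidual R C P₀))
    (hP₁ : Function.Surjective (bidual R C P₁)) [Subsingleton (ExtMod R (P₂ →ₗ[R] C) C 1)] :
    Subsingleton (ExtMod R (DualCokernel C d₂) C 1) := by
  refine (isShortExact_coker_of_exact h).extMod_one_subsingleton_of_lcomp_surjective fun φ ↦ ?_
  obtain ⟨x, hx, hφ⟩ := exists_mem_ker_forall_mk_eq hP₀ hP₁ φ
  obtain ⟨y, rfl⟩ := (hd x).1 hx
  exact ⟨bidual R C P₂ y, Submodule.linearMap_qext _ (LinearMap.ext fun ψ ↦ (hφ ψ).symm)⟩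

end DualCokernel

end Transpose

section TransposeExt

variable {R}
variable {C K M P₀ P₁ : Type u} [AddCommGroup C] [Module R C] [AddCommGroup K] [Module R K]
  [AddCommGroup M] [Module R M] [AddCommGroup P₀] [Module R P₀] [AddCommGroup P₁] [Module R P₁]
  [IsNoetherianRing R] [Module.Finite R P₀] [Module.Projective R P₀] [Module.Finite R P₁]
  [Module.Projective R P₁]

namespace IsSemidualizing

variable {ι : K →ₗ[R] P₀} {p : P₀ →ₗ[R] M} {d : P₁ →ₗ[R] K}

lemma extMod_extMod_of_gcdimLE_one (hC : IsSemidualizing R (.of R C)) (h : IsShortExact ι p)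
    (hd : Function.Surjective d) (hM : gcdimLE R (.of R C) 1 (.of R M)) :
    Subsingleton (ExtMod R (ExtMod R M C 1) C 0) ∧
      ∀ i, Subsingleton (ExtMod R (ExtMod R M C 1) C (i + 1)) ↔
        Subsingleton (ExtMod R (DualCokernel C (ι ∘ₗ d)) C (i + 1)) := by
  have hP₀ := hC.isTotallyCReflexive_of_projective (P := P₀)
  have hP₁ := hC.isTotallyCReflexive_of_projective (P := P₁)
  have hK : IsTotallyCReflexive R (.of R C) (.of R K) := hM.of_isShortExact_projective h hP₀
  have := hP₀.extMod_subsingleton 0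
  have equiv_ext := DualCokernel.equivExtOne (C := C) h
  refine ⟨?_, fun i ↦ ?_⟩
  · have := DualCokernel.subsingleton_hom h.injective hP₀.bijective_bidual.injective
      hK.bijective_bidual.surjective
    exact (extMod_subsingleton_congr equiv_ext).1
      (extModZeroEquiv (DualCokernel C ι) C).toEquiv.subsingleton
  · rw [DualCokernel.extMod_subsingleton_comp_iff ι hd hP₁ hK, extMod_subsingleton_congr equiv_ext]

theorem extMod_extMod_of_gcdimLE_succ (hC : IsSemidualizing R (.of R C)) (n : ℕ)
    (h : IsShortExact ι p) (hd : Function.Surjective d)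
    (hM : gcdimLE R (.of R C) (n + 1) (.of R M))
    (hExt : ∀ i < n, Subsingleton (ExtMod R M C (i + 1))) :
    (∀ j ≤ n, Subsingleton (ExtMod R (ExtMod R M C (n + 1)) C j)) ∧
      ∀ i, Subsingleton (ExtMod R (ExtMod R M C (n + 1)) C (i + n + 1)) ↔
        Subsingleton (ExtMod R (DualCokernel C (ι ∘ₗ d)) C (i + 1)) := by
  induction n generalizing K M P₀ P₁ with
  | zero =>
    obtain ⟨vanish, shift_iff⟩ := hC.extMod_extMod_of_gcdimLE_one h hd hM
    exact ⟨fun j hj ↦ by rwa [Nat.le_zero.1 hj], shift_iff⟩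
  | succ n ih =>
    have hP₀ := hC.isTotallyCReflexive_of_projective (P := P₀)
    have hP₁ := hC.isTotallyCReflexive_of_projective (P := P₁)
    have := hExt 0 n.succ_pos
    have ker_exact := isShortExact_ker_subtype hd
    obtain ⟨m, q, hq⟩ := Module.Finite.exists_fin' R (LinearMap.ker d)
    have hP₂ := hC.isTotallyCReflexive_pi m
    have shift (i : ℕ) : ExtMod R K C (i + 1) ≃ₗ[R] ExtMod R M C (i + 2) :=
      have := hP₀.extMod_subsingleton i
      have := hP₀.extMod_subsingleton (i + 1)
      h.extShift C (i + 1)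
    have exact_K : Function.Exact ((LinearMap.ker d).subtype ∘ₗ q) d :=
      hq.comp_exact_iff_exact.2 ker_exact.exact
    have exact_M : Function.Exact ((LinearMap.ker d).subtype ∘ₗ q) (ι ∘ₗ d) :=
      h.injective.comp_exact_iff_exact.2 exact_K
    have dual_exact := DualCokernel.exact_lcomp_lcomp (C := C) h hd exact_K
    obtain ⟨vanish, shift_iff⟩ := ih ker_exact hq (hM.of_isShortExact_projective h hP₀)
      fun i hi ↦ (shift i).toEquiv.subsingleton_congr.2 (hExt (i + 1) (by omega))
    simp only [extMod_subsingleton_congr (shift n)] at vanish shift_iff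
    refine ⟨fun j hj ↦ ?_, fun i ↦ ?_⟩
    · obtain hj | rfl := hj.lt_or_eq
      · exact vanish j (by omega)
      · have := hP₂.extMod_dual_subsingleton 0
        have := DualCokernel.extMod_one_subsingleton dual_exact exact_M
          hP₀.bijective_bidual.injective hP₁.bijective_bidual.surjective
        simpa only [zero_add] using (shift_iff 0).2 this
    · rw [← DualCokernel.extMod_subsingleton_succ_iff dual_exact hP₂, ← shift_iff,
        add_right_comm i 1 n, add_assoc i n 1]

end IsSemidualizing

end TransposeExt

section ExtEval

variable {R}
variable {E D C D' F : Type u} [AddCommGroup E] [Module R E] [AddCommGroup D] [Module R D]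
  [AddCommGroup C] [Module R C] [AddCommGroup D'] [Module R D'] [AddCommGroup F] [Module R F]

variable (R E D C) in
/-- The evaluation map `Ext_R^k(E, Hom_R(D, C)) → Hom_R(D, Ext_R^k(E, C))`. -/
def extEval (k : ℕ) : ExtMod R E (D →ₗ[R] C) k →ₗ[R] D →ₗ[R] ExtMod R E C k :=
  (extPostcomp E k ∘ₗ bidual R C D).flip

lemma extEval_apply {k : ℕ} (x : ExtMod R E (D →ₗ[R] C) k) (d : D) :
    extEval R E D C k x d = extPostcomp E k (bidual R C D d) x := rfl

lemma extEval_extPostcomp (f : D' →ₗ[R] D) {k : ℕ} (x : ExtMod R E (D →ₗ[R] C) k) :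
    extEval R E D' C k (extPostcomp E k (LinearMap.lcomp R C f) x) =
      LinearMap.lcomp R (ExtMod R E C k) f (extEval R E D C k x) := by
  ext d
  rw [extEval_apply, extPostcomp_extPostcomp]
  rfl

lemma extEval_bijective_of_basis {ι : Type*} [Finite ι] (b : Module.Basis ι R F) (k : ℕ) :
    Function.Bijective (extEval R E F C k) := by
  classical
  have := Fintype.ofFinite ι
  let inclusion (j : ι) : C →ₗ[R] F →ₗ[R] C := LinearMap.smulRightₗ (b.coord j)
  have eval_inclusion (i j : ι) :
      bidual R C F (b i) ∘ₗ inclusion j = if i = j then LinearMap.id else 0 := by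
    ext c
    change b.coord j (b i) • c = _
    rw [b.coord_apply, b.repr_self, Finsupp.single_apply]
    split_ifs <;> simp
  have sum_inclusion_eval : ∑ j, inclusion j ∘ₗ bidual R C F (b j) = LinearMap.id := by
    ext φ v
    rw [LinearMap.sum_apply, LinearMap.sum_apply]
    change ∑ j, b.repr v j • φ (b j) = φ v
    simp only [← map_smul, ← map_sum, b.sum_repr]
  have eq_sum (x : ExtMod R E (F →ₗ[R] C) k) :
      x = ∑ j, extPostcomp E k (inclusion j) (extEval R E F C k x (b j)) := by
    simp only [extEval_apply, extPostcomp_extPostcomp]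
    rw [← LinearMap.sum_apply, ← map_sum, sum_inclusion_eval, extPostcomp_id, LinearMap.id_apply]
  refine ⟨fun x y hxy ↦ by rw [eq_sum x, eq_sum y, hxy],
    fun φ ↦ ⟨∑ j, extPostcomp E k (inclusion j) (φ (b j)), b.ext fun i ↦ ?_⟩⟩
  rw [map_sum, LinearMap.sum_apply]
  simp only [extEval_apply, extPostcomp_extPostcomp, eval_inclusion]
  rw [Finset.sum_eq_single i (fun j _ hji ↦ by simp [hji.symm]) (by simp)]
  simp [extPostcomp_id]

lemma extMod_ker_subsingleton [Module.Projective R F] {p : F →ₗ[R] D}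
    (hp : Function.Surjective p) (hD : ∀ i, Subsingleton (ExtMod R D C (i + 1))) (i : ℕ) :
    Subsingleton (ExtMod R (LinearMap.ker p) C (i + 1)) :=
  have : Subsingleton (ExtMod R F C (i + 1)) := extMod_subsingleton_of_projective i.succ_pos
  have := hD (i + 1)
  (isShortExact_ker_subtype hp).extMod_subsingleton_left (i + 1)

variable [IsNoetherianRing R]

lemma extPostcomp_lcomp_injective [Module.Finite R F] [Module.Projective R F] {p : F →ₗ[R] D}
    (hp : Function.Surjective p) (hD : ∀ i, Subsingleton (ExtMod R D C (i + 1))) {k : ℕ}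
    (hE : ∀ j < k, Subsingleton (ExtMod R E C j)) :
    Function.Injective (extPostcomp E k (LinearMap.lcomp R C p)) := by
  induction k using Nat.strong_induction_on generalizing D F with
  | _ k ih =>
    have := hD 0
    refine (isShortExact_ker_subtype hp).dual.extPostcomp_injective fun j hj ↦ ?_
    obtain ⟨m, q, hq⟩ := Module.Finite.exists_fin' R (LinearMap.ker p)
    have : Subsingleton (ExtMod R E C j) := hE j hj
    have : Subsingleton (ExtMod R E ((Fin m → R) →ₗ[R] C) j) :=
      (extEval_bijective_of_basis (Pi.basisFun R (Fin m)) j).1.subsingleton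
    exact (ih j hj hq (extMod_ker_subsingleton hp hD) fun i hi ↦ hE i (hi.trans hj)).subsingleton

variable [Module.Finite R D]

lemma extEval_injective (hD : ∀ i, Subsingleton (ExtMod R D C (i + 1))) {k : ℕ}
    (hE : ∀ j < k, Subsingleton (ExtMod R E C j)) : Function.Injective (extEval R E D C k) := by
  obtain ⟨m, p, hp⟩ := Module.Finite.exists_fin' R D
  have comp_injective := (extEval_bijective_of_basis (Pi.basisFun R (Fin m)) k).1.comp
    (extPostcomp_lcomp_injective hp hD hE)
  refine fun x y hxy ↦ comp_injective ?_
  simp only [Function.comp_apply, extEval_extPostcomp, hxy]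

lemma extEval_bijective (hD : ∀ i, Subsingleton (ExtMod R D C (i + 1))) {k : ℕ}
    (hE : ∀ j < k, Subsingleton (ExtMod R E C j)) : Function.Bijective (extEval R E D C k) := by
  obtain ⟨m, p, hp⟩ := Module.Finite.exists_fin' R D
  have h := isShortExact_ker_subtype hp
  have := hD 0
  exact LinearMap.bijective_of_bijective_of_injective_of_left_exact _ _ _ _
    (extEval R E D C k) (extEval R E (Fin m → R) C k) (extEval R E (LinearMap.ker p) C k)
    (LinearMap.ext fun x ↦ (extEval_extPostcomp p x).symm)
    (LinearMap.ext fun x ↦ (extEval_extPostcomp (LinearMap.ker p).subtype x).symm)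
    (h.dual.exact_extPostcomp_extPostcomp k)
    (LinearMap.exact_lcomp_of_exact_of_surjective _ h.exact h.surjective)
    (extEval_bijective_of_basis (Pi.basisFun R (Fin m)) k)
    (extEval_injective (extMod_ker_subsingleton hp hD) hE)
    (extPostcomp_lcomp_injective hp hD hE) (LinearMap.lcomp_injective_of_surjective p hp)

end ExtEval

section Grade

variable {R}
variable {E C : Type u} [AddCommGroup E] [Module R E] [AddCommGroup C] [Module R C]

lemma subsingleton_of_subsingleton_linearMap [IsNoetherianRing R] [Module.Finite R C]
    (hC : Function.Injective fun r : R ↦ (r • LinearMap.id : C →ₗ[R] C)) [Module.Finite R E]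
    [Subsingleton (C →ₗ[R] E)] : Subsingleton E := by
  obtain ⟨r, hr, hreg⟩ :=
    IsSMulRegular.subsingleton_linearMap_iff.1 (inferInstance : Subsingleton (C →ₗ[R] E))
  obtain rfl : r = 0 := hC <| LinearMap.ext fun c ↦ by
    simpa using Module.mem_annihilator.1 hr c
  exact ⟨fun x y ↦ hreg (by simp)⟩

namespace IsSemidualizing

lemma extMod_ring_subsingleton_iff [IsNoetherianRing R] [Module.Finite R E]
    (hC : IsSemidualizing R (.of R C)) {k : ℕ} (hE : ∀ j < k, Subsingleton (ExtMod R E C j)) :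
    Subsingleton (ExtMod R E R k) ↔ Subsingleton (ExtMod R E C k) := by
  obtain ⟨hfin, homothety_bijective, hExt⟩ := hC
  have : Module.Finite R C := hfin
  let homothety : R ≃ₗ[R] (C →ₗ[R] C) :=
    .ofBijective (LinearMap.toSpanSingleton R _ LinearMap.id) homothety_bijective
  have eval_bijective := extEval_bijective (D := C)
    (fun i ↦ subsingleton_extM_iff.1 (hExt (i + 1) i.succ_pos)) hE
  rw [extMod_subsingleton_congr_right homothety,
    (Equiv.ofBijective _ eval_bijective).subsingleton_congr]
  have : Module.Finite R (ExtMod R E C k) := inferInstance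
  exact ⟨fun _ ↦ subsingleton_of_subsingleton_linearMap homothety_bijective.1,
    fun _ ↦ inferInstance⟩

lemma forall_lt_extMod_ring_subsingleton_iff [IsNoetherianRing R] [Module.Finite R E]
    (hC : IsSemidualizing R (.of R C)) (k : ℕ) :
    (∀ j < k, Subsingleton (ExtMod R E R j)) ↔ ∀ j < k, Subsingleton (ExtMod R E C j) := by
  induction k with
  | zero => simp
  | succ k ih =>
    simp only [Nat.forall_lt_succ_right, ih]
    exact and_congr_right hC.extMod_ring_subsingleton_iff

end IsSemidualizing

end Grade

section GradeFormula

variable {R}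

lemma natCast_le_sInf_image_iff {S : Set ℕ} {k : ℕ} :
    (k : ℕ∞) ≤ sInf ((fun i : ℕ ↦ (i : ℕ∞)) '' S) ↔ ∀ j < k, j ∉ S := by
  simp only [le_sInf_iff, Set.forall_mem_image, Nat.cast_le]
  exact ⟨fun h j hj hjS ↦ (h hjS).not_gt hj, fun h j hjS ↦ not_lt.1 fun hj ↦ h j hj hjS⟩

lemma mem_of_sInf_image_eq_natCast {S : Set ℕ} {n : ℕ}
    (h : sInf ((fun i : ℕ ↦ (i : ℕ∞)) '' S) = n) : n ∈ S := by
  have image_nonempty : ((fun i : ℕ ↦ (i : ℕ∞)) '' S).Nonempty :=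
    Set.nonempty_iff_ne_empty.2 fun hS ↦ by simp [hS] at h
  obtain ⟨m, hm, hmn⟩ := csInf_mem image_nonempty
  rwa [← Nat.cast_injective (hmn.trans h)]

variable {M C : ModuleCat.{u} R}

lemma gcdimLE_of_gcdim_eq {n : ℕ} (h : gcdim R C M = n) : gcdimLE R C n M :=
  mem_of_sInf_image_eq_natCast h

lemma natCast_le_gradeR_iff {k : ℕ} :
    (k : ℕ∞) ≤ gradeR R M ↔ ∀ j < k, Subsingleton (ExtMod R M R j) := by
  simp only [gradeR, natCast_le_sInf_image_iff, Set.mem_ofPred_eq, not_not, subsingleton_extM_iff]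

lemma natCast_succ_le_rgrade_iff {k : ℕ} :
    ((k + 1 : ℕ) : ℕ∞) ≤ rgrade R C M ↔ ∀ i < k, Subsingleton (ExtMod R M C (i + 1)) := by
  simp only [rgrade, natCast_le_sInf_image_iff, Set.mem_ofPred_eq, not_and_not_right,
    subsingleton_extM_iff]
  refine ⟨fun h i hi ↦ h (i + 1) (by omega) i.succ_pos, fun h j hj hj₀ ↦ ?_⟩
  obtain ⟨i, rfl⟩ := Nat.exists_eq_succ_of_ne_zero hj₀.ne'
  exact h i (by omega)

lemma gradeR_congr {N : ModuleCat.{u} R} (e : M ≃ₗ[R] N) : gradeR R M = gradeR R N :=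
  ENat.eq_of_forall_natCast_le_iff fun k ↦ by
    simp only [natCast_le_gradeR_iff, extMod_subsingleton_congr e]

lemma rgrade_congr {N : ModuleCat.{u} R} (e : M ≃ₗ[R] N) : rgrade R C M = rgrade R C N := by
  simp only [rgrade, subsingleton_extM_iff]
  simp only [extMod_subsingleton_congr e]

lemma IsSemidualizing.gradeR_eq_rgrade_add [IsNoetherianRing R] {E T : ModuleCat.{u} R}
    [Module.Finite R E] (hC : IsSemidualizing R C) {n : ℕ}
    (vanish : ∀ j ≤ n, Subsingleton (ExtMod R E C j))
    (shift_iff : ∀ i, Subsingleton (ExtMod R E C (i + n + 1)) ↔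
      Subsingleton (ExtMod R T C (i + 1))) :
    gradeR R E = rgrade R C T + n := by
  refine ENat.eq_of_forall_natCast_le_iff fun k ↦ ?_
  rw [natCast_le_gradeR_iff, hC.forall_lt_extMod_ring_subsingleton_iff]
  obtain hk | hk := lt_or_ge n k
  · obtain ⟨m, rfl⟩ := Nat.exists_eq_add_of_lt hk
    have cancel : ((n + m + 1 : ℕ) : ℕ∞) ≤ rgrade R C T + n ↔
        ((m + 1 : ℕ) : ℕ∞) ≤ rgrade R C T := by
      rw [add_assoc, add_comm n, Nat.cast_add _ n,
        ENat.add_le_add_iff_right (ENat.natCast_ne_top n)]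
    rw [cancel, natCast_succ_le_rgrade_iff]
    refine ⟨fun h i hi ↦ (shift_iff i).1 (h _ (by omega)), fun h j hj ↦ ?_⟩
    obtain hjn | hnj := le_or_gt j n
    · exact vanish j hjn
    · obtain ⟨i, rfl⟩ := Nat.exists_eq_add_of_lt hnj
      rw [add_comm n i]
      exact (shift_iff i).2 (h i (by omega))
  · exact iff_of_true (fun j hj ↦ vanish j (hj.le.trans hk))
      ((Nat.cast_le.2 hk).trans le_add_self)

end GradeFormula

section Presentation

variable {R}

lemma exists_surjective_ker_subtype_comp {A B D : Type u} [AddCommGroup A] [Module R A]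
    [AddCommGroup B] [Module R B] [AddCommGroup D] [Module R D] {d : A →ₗ[R] B} {p : B →ₗ[R] D}
    (h : Function.Exact d p) :
    ∃ d' : A →ₗ[R] LinearMap.ker p,
      Function.Surjective d' ∧ (LinearMap.ker p).subtype ∘ₗ d' = d := by
  refine ⟨d.codRestrict _ fun x ↦ LinearMap.mem_ker.2 (h.apply_apply_eq_zero x), ?_,
    LinearMap.subtype_comp_codRestrict _ _ _⟩
  rintro ⟨y, hy⟩
  obtain ⟨x, rfl⟩ := (h y).1 hy
  exact ⟨x, rfl⟩

theorem statement9_general [IsNoetherianRing R] {C M : ModuleCat.{u} R}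
    (hC : IsSemidualizing R C) {n : ℕ} (hdim : gcdimLE R C n M) (hgrade : rgrade R C M = n)
    {P₁ P₀ : Type u} [AddCommGroup P₁] [Module R P₁] [Module.Finite R P₁] [Module.Projective R P₁]
    [AddCommGroup P₀] [Module R P₀] [Module.Finite R P₀] [Module.Projective R P₀]
    {d : P₁ →ₗ[R] P₀} {π : P₀ →ₗ[R] M} (hd : Function.Exact d π) (hπ : Function.Surjective π) :
    rgrade R C M + rgrade R C (.of R (DualCokernel C d)) = gradeR R (ExtM R M C n) + 1 := by
  cases n with
  | zero =>
    have one_le : ((0 + 1 : ℕ) : ℕ∞) ≤ rgrade R C M := natCast_succ_le_rgrade_iff.2 (by simp)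
    simp [hgrade] at one_le
  | succ n =>
    have : Module.Finite R C := hC.1
    have : Module.Finite R M := .of_surjective π hπ
    obtain ⟨d, hd_surj, rfl⟩ := exists_surjective_ker_subtype_comp hd
    obtain ⟨vanish, shift_iff⟩ := hC.extMod_extMod_of_gcdimLE_succ n (isShortExact_ker_subtype hπ)
      hd_surj hdim (natCast_succ_le_rgrade_iff.1 hgrade.ge)
    obtain ⟨e⟩ := nonempty_extM_linearEquiv_ext M C (n + 1)
    rw [gradeR_congr (N := .of R (ExtMod R M C (n + 1))) e,
      hC.gradeR_eq_rgrade_add (T := .of R (DualCokernel C _)) vanish shift_iff, hgrade,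
      Nat.cast_succ]
    ring

end Presentation

/-- if `M` is reduced `G_C`-perfect of `G_C`-dimension `n`, then
`r.grade(M,C) + r.grade(Tr_C(M),C) = grade(Ext_R^n(M,C)) + 1` in `ℕ∞`. -/
theorem statement9 [IsNoetherianRing R] (hsp : IsSemiperfectRing R)
    (C : ModuleCat.{u} R) (hC : IsSemidualizing R C)
    (M : ModuleCat.{u} R) (hMfin : Module.Finite R ↥M)
    (n : ℕ) (hred : IsReducedGCPerfect R C M) (hdim : gcdim R C M = n) :
    ∀ T : ModuleCat.{u} R, IsTransposeC R C M T →
      rgrade R C M + rgrade R C T = gradeR R (ExtM R M C n) + 1 := by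
  rintro T ⟨P₁, P₀, d, π, ⟨_, _, ⟨_, hπ, -⟩, hd, _, -⟩, ⟨e⟩⟩
  rw [rgrade_congr (N := .of R (DualCokernel C d)) e]
  exact statement9_general hC (gcdimLE_of_gcdim_eq hdim) (hred.2.trans hdim)
    (LinearMap.exact_iff.2 hd.symm) hπ

end
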